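/- arXiv:2603.05358 — 4 statements merged into one kernel-verified Lean document; each statement's English description precedes it below -/
import Mathlib

section
/- Let S be a finite set of points in the Euclidean plane, let T ⊆ S, let r_min, r_max be reals with 0 < r_min ≤ r_max, and let H be a simple graph on vertex set S such that for all distinct p, q ∈ S \ T, p and q are adjacent in H if and only if dist(p,q) ≤ 2. Then the following are equivalent: (1) there exists r : S → ℝ with r_min ≤ r(p) ≤ r_max for all p ∈ T and r(p) = 1 for all p ∈ S \ T such that for all distinct p, q ∈ S, p and q are adjacent in H if and only if dist(p,q) ≤ r(p) + r(q); (2) there exist x : T → ℝ and a real ε > 0 such that: r_min ≤ x(p) ≤ r_max for all p ∈ T; for every p ∈ T and every q ∈ S \ T, if p and q are adjacent in H then x(p) + 1 ≥ dist(p,q), and if p ≠ q and p, q are not adjacent in H then x(p) + 1 ≤ dist(p,q) − ε; and for all distinct p, q ∈ T, if p and q are adjacent in H then x(p) + x(q) ≥ dist(p,q), and otherwise x(p) + x(q) ≤ dist(p,q) − ε. -/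
/-!
The LP differs from the definition of a realizing radius assignment only in that each strict
inequality `x p + x q < dist p q` for a non-edge is replaced by `x p + x q ≤ dist p q - ε` with one
common `ε > 0`. Since there are finitely many pairs, the smallest of the positive gaps
`dist p q - (r p + r q)` serves as `ε` (`exists_uniform_gap`). Conversely, a solution `x` of the LP
on `T` is extended by the radius `1` outside `T`; pairs of points outside `T` are not constrained by
the LP, and for them the assumption on `H` gives the equivalence, as `1 + 1 = 2`.
-/

/-- Finitely many positive reals have a common positive lower bound. -/
lemma exists_uniform_gap {α : Type*} (A : Finset α) (f : α → ℝ) (hf : ∀ a ∈ A, 0 < f a) :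
    ∃ ε : ℝ, 0 < ε ∧ ∀ a ∈ A, ε ≤ f a := by
  rcases A.eq_empty_or_nonempty with rfl | hA
  · exact ⟨1, one_pos, by simp⟩
  · obtain ⟨a, ha, hmin⟩ := A.exists_min_image f hA
    exact ⟨f a, hf a ha, hmin⟩

/-- Correctness of the LP formulation for Constrained Scaling To Graph. -/
theorem lp_correctness
    (S T : Finset (EuclideanSpace ℝ (Fin 2))) (hTS : T ⊆ S)
    (rmin rmax : ℝ) (hrmin : 0 < rmin) (hminmax : rmin ≤ rmax)
    (H : SimpleGraph (EuclideanSpace ℝ (Fin 2)))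
    (hH : ∀ p ∈ S, ∀ q ∈ S, p ∉ T → q ∉ T → p ≠ q → (H.Adj p q ↔ dist p q ≤ 2)) :
    (∃ r : EuclideanSpace ℝ (Fin 2) → ℝ,
        (∀ p ∈ T, rmin ≤ r p ∧ r p ≤ rmax) ∧
        (∀ p ∈ S, p ∉ T → r p = 1) ∧
        (∀ p ∈ S, ∀ q ∈ S, p ≠ q → (H.Adj p q ↔ dist p q ≤ r p + r q)))
    ↔
    (∃ (x : EuclideanSpace ℝ (Fin 2) → ℝ) (ε : ℝ), 0 < ε ∧
        (∀ p ∈ T, rmin ≤ x p ∧ x p ≤ rmax) ∧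
        (∀ p ∈ T, ∀ q ∈ S, q ∉ T →
          (H.Adj p q → x p + 1 ≥ dist p q) ∧
          (p ≠ q → ¬ H.Adj p q → x p + 1 ≤ dist p q - ε)) ∧
        (∀ p ∈ T, ∀ q ∈ T, p ≠ q →
          (H.Adj p q → x p + x q ≥ dist p q) ∧
          (¬ H.Adj p q → x p + x q ≤ dist p q - ε))) := by
  classical
  constructor
  · rintro ⟨r, hT, hone, hadj⟩
    obtain ⟨ε, hε, hgap⟩ := exists_uniform_gap
      ((S ×ˢ S).filter fun z => z.1 ≠ z.2 ∧ ¬ H.Adj z.1 z.2)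
      (fun z => dist z.1 z.2 - (r z.1 + r z.2)) (by
        rintro ⟨p, q⟩ hz
        simp only [Finset.mem_filter, Finset.mem_product] at hz
        obtain ⟨⟨hp, hq⟩, hne, hnadj⟩ := hz
        rw [hadj p hp q hq hne, not_le] at hnadj
        exact sub_pos.mpr hnadj)
    have gap : ∀ p ∈ S, ∀ q ∈ S, p ≠ q → ¬ H.Adj p q → r p + r q ≤ dist p q - ε := by
      intro p hp q hq hne hnadj
      have := hgap (p, q) (by simp [hp, hq, hne, hnadj])
      dsimp only at this
      linarith
    refine ⟨r, ε, hε, hT, fun p hp q hq hqT => ?_, fun p hp q hq hne => ?_⟩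
    · rw [← hone q hq hqT]
      exact ⟨fun h => (hadj p (hTS hp) q hq h.ne).1 h, gap p (hTS hp) q hq⟩
    · exact ⟨(hadj p (hTS hp) q (hTS hq) hne).1, gap p (hTS hp) q (hTS hq) hne⟩
  · rintro ⟨x, ε, hε, hT, hmixed, hboth⟩
    -- An LP constraint pair for `p, q` gives the equivalence, because `ε > 0`.
    have key : ∀ {P : Prop} {s d : ℝ}, (P → s ≥ d) → (¬ P → s ≤ d - ε) → (P ↔ d ≤ s) := by
      intro P s d h₁ h₂
      refine ⟨h₁, fun h => by_contra fun hP => ?_⟩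
      linarith [h₂ hP]
    refine ⟨fun p => if p ∈ T then x p else 1, fun p hp => by simpa [hp] using hT p hp,
      fun p _ hp => by simp [hp], fun p hp q hq hne => ?_⟩
    by_cases hpT : p ∈ T <;> by_cases hqT : q ∈ T <;> simp only [hpT, hqT, if_true, if_false]
    · exact key (hboth p hpT q hqT hne).1 (hboth p hpT q hqT hne).2
    · exact key (hmixed p hpT q hq hqT).1 ((hmixed p hpT q hq hqT).2 hne)
    · -- The LP states mixed constraints with the point of `T` first.
      rw [H.adj_comm, dist_comm, add_comm]
      exact key (hmixed q hqT p hp hpT).1 ((hmixed q hqT p hp hpT).2 hne.symm)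
    · rw [one_add_one_eq_two]
      exact hH p hp q hq hpT hqT hne
end

section
/- Let S be a finite set of points in the Euclidean plane, let r_min, r_max be reals with 0 < r_min ≤ r_max and 1 < r_max, and let k be a natural number. Assume dist(p, q) ≤ 2·r_max for all p, q ∈ S. Let T' := {p ∈ S : ∃ q ∈ S with dist(p, q) > 1 + r_max} and assume |T'| ≤ k. Let X := {p ∈ S \ T' : ∃ q ∈ S with 2 < dist(p, q) ≤ 1 + r_max}. Then the following are equivalent: (1) there exists r : S → ℝ such that for every p ∈ S either r(p) = 1 or r_min ≤ r(p) ≤ r_max, the set {p ∈ S : r(p) ≠ 1} has at most k elements, and the disk graph G(S, r) is complete; (2) there exists Y ⊆ X with |Y| ≥ |X| − (k − |T'|) such that dist(p, q) ≤ 2 for all p, q ∈ Y (that is, Y is a clique of size |X| − (k − |T'|) in the unit disk graph on X). -/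
/-!
A disk in `T'` must be scaled, since a unit disk reaches at most distance `1 + rmax`. Given a
solution `r`, the unscaled points of `X` form a clique of the unit disk graph, and as `T'` and `X`
are disjoint, at most `k - |T'|` points of `X` are scaled. Conversely, given a clique `Y`, scale
exactly `T' ∪ (X \ Y)` to `rmax`: two scaled disks meet by the diameter bound, a scaled and an
unscaled one because the latter is outside `T'`, and two unscaled points at distance more than `2`
would both lie in `X`, hence in `Y`, which is impossible.
-/

/-- The combinatorial core of the polynomial-time algorithm for Scaling To Complete:
after scaling the forced set `T'`, solvability is equivalent to the existence of a
large clique in the unit disk graph on the set `X`. -/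
theorem scaling_to_complete_iff_clique
    (S : Finset (EuclideanSpace ℝ (Fin 2)))
    (rmin rmax : ℝ) (k : ℕ)
    (hrmin : 0 < rmin) (hminmax : rmin ≤ rmax) (hrmax : 1 < rmax)
    (hdiam : ∀ p ∈ S, ∀ q ∈ S, dist p q ≤ 2 * rmax) :
    let T' : Set (EuclideanSpace ℝ (Fin 2)) :=
      {p | p ∈ S ∧ ∃ q ∈ S, 1 + rmax < dist p q}
    let X : Set (EuclideanSpace ℝ (Fin 2)) :=
      {p | p ∈ S ∧ p ∉ T' ∧ ∃ q ∈ S, 2 < dist p q ∧ dist p q ≤ 1 + rmax}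
    T'.ncard ≤ k →
    ((∃ r : EuclideanSpace ℝ (Fin 2) → ℝ,
        (∀ p ∈ S, r p = 1 ∨ (rmin ≤ r p ∧ r p ≤ rmax)) ∧
        {p | p ∈ S ∧ r p ≠ 1}.ncard ≤ k ∧
        (∀ p ∈ S, ∀ q ∈ S, p ≠ q → dist p q ≤ r p + r q)) ↔
      (∃ Y ⊆ X, X.ncard - (k - T'.ncard) ≤ Y.ncard ∧
        ∀ p ∈ Y, ∀ q ∈ Y, dist p q ≤ 2)) := by
  classical
  intro T' X hT
  have hTfin : T'.Finite := S.finite_toSet.subset fun p hp => hp.1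
  have hXfin : X.Finite := S.finite_toSet.subset fun p hp => hp.1
  constructor
  · rintro ⟨r, hr, hcard, hadj⟩
    set R : Set (EuclideanSpace ℝ (Fin 2)) := {p | p ∈ S ∧ r p ≠ 1} with hR
    have hRfin : R.Finite := S.finite_toSet.subset fun p hp => hp.1
    have hle : ∀ p ∈ S, r p ≤ rmax := fun p hp => by
      rcases hr p hp with h | h
      · linarith
      · exact h.2
    have hTR : T' ⊆ R := by
      rintro p ⟨hp, q, hq, hpq⟩
      refine ⟨hp, fun h1 => ?_⟩
      have hne : p ≠ q := by
        rintro rfl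
        rw [dist_self] at hpq
        linarith
      have := hadj p hp q hq hne
      have := hle q hq
      linarith
    refine ⟨X \ R, Set.sdiff_subset, ?_, ?_⟩
    · have hdisj : Disjoint T' (X ∩ R) :=
        Set.disjoint_left.2 fun p hpT hp => hp.1.2.1 hpT
      have h1 := Set.ncard_union_eq hdisj hTfin (hXfin.inter_of_left R)
      have h2 : (T' ∪ X ∩ R).ncard ≤ R.ncard :=
        Set.ncard_le_ncard (Set.union_subset hTR Set.inter_subset_right) hRfin
      have h3 := Set.ncard_inter_add_ncard_sdiff_eq_ncard X R hXfin
      omega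
    · rintro p ⟨hpX, hpR⟩ q ⟨hqX, hqR⟩
      have hp1 : r p = 1 := by_contra fun h => hpR ⟨hpX.1, h⟩
      have hq1 : r q = 1 := by_contra fun h => hqR ⟨hqX.1, h⟩
      by_cases hne : p = q
      · rw [hne, dist_self]
        norm_num
      · have := hadj p hpX.1 q hqX.1 hne
        linarith
  · rintro ⟨Y, hYX, hYcard, hY⟩
    -- An unscaled point is outside `T'`, so every point of `S` is within `1 + rmax` of it.
    have hfar : ∀ p ∈ S, p ∉ T' → ∀ q ∈ S, dist p q ≤ 1 + rmax := fun p hp hpT q hq =>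
      not_lt.1 fun h => hpT ⟨hp, q, hq, h⟩
    refine ⟨fun p => if p ∈ T' ∪ X \ Y then rmax else 1, ?_, ?_, ?_⟩
    · intro p _
      dsimp only
      split_ifs
      · exact Or.inr ⟨hminmax, le_rfl⟩
      · exact Or.inl rfl
    · have hsub : {p | p ∈ S ∧ (if p ∈ T' ∪ X \ Y then rmax else 1) ≠ 1} ⊆ T' ∪ X \ Y := by
        rintro p ⟨_, hp⟩
        by_contra h
        exact hp (if_neg h)
      have h1 := Set.ncard_le_ncard hsub (hTfin.union hXfin.sdiff)
      have h2 := Set.ncard_union_le T' (X \ Y)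
      have h3 := Set.ncard_sdiff_add_ncard_of_subset hYX hXfin
      refine h1.trans ?_
      omega
    · intro p hp q hq _
      dsimp only
      split_ifs with h1 h2 h2
      · linarith [hdiam p hp q hq]
      · have := hfar q hq (fun h => h2 (Or.inl h)) p hp
        rw [dist_comm] at this
        linarith
      · exact hfar p hp (fun h => h1 (Or.inl h)) q hq
      · have hpT : p ∉ T' := fun h => h1 (Or.inl h)
        have hqT : q ∉ T' := fun h => h2 (Or.inl h)
        by_contra! hlt
        have h2lt : 2 < dist p q := by linarith
        have hpX : p ∈ X := ⟨hp, hpT, q, hq, h2lt, hfar p hp hpT q hq⟩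
        have hqX : q ∈ X :=
          ⟨hq, hqT, p, hp, by rwa [dist_comm], hfar q hq hqT p hp⟩
        have hpY : p ∈ Y := by_contra fun h => h1 (Or.inr ⟨hpX, h⟩)
        have hqY : q ∈ Y := by_contra fun h => h2 (Or.inr ⟨hqX, h⟩)
        exact absurd (hY p hpY q hqY) (not_le.2 h2lt)
end

section
/- Let η ≥ 1 and κ ≥ 1 be integers and let X be a Grid Tiling instance, i.e., finite sets X_{i,j} ⊆ {1,…,η} × {1,…,η} for all i, j ∈ {1,…,κ}. Define X'_{i,j} := {(a·η² + i, b·η² + j) : (a, b) ∈ X_{i,j}}. Then X has a ≤-solution (a choice x_{i,j} = (a_{i,j}, b_{i,j}) ∈ X_{i,j} for all i, j with a_{i,j} ≤ a_{i+1,j} for all 1 ≤ i < κ, 1 ≤ j ≤ κ, and b_{i,j} ≤ b_{i,j+1} for all 1 ≤ i ≤ κ, 1 ≤ j < κ) if and only if X' has a <-solution (a choice x'_{i,j} ∈ X'_{i,j} whose first coordinates are strictly increasing along every row from column i to column i+1 and whose second coordinates are strictly increasing along every column from row j to row j+1). -/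
/-!
Neighbouring cells carry offsets that differ by exactly one, and
`a * η ^ 2 + i < b * η ^ 2 + (i + 1)` is equivalent to `a * η ^ 2 ≤ b * η ^ 2`, hence to `a ≤ b`
because `η > 0`. So the map `(a, b) ↦ (a * η ^ 2 + i, b * η ^ 2 + j)`, applied cell by cell, turns
`≤`-solutions into `<`-solutions, and any choice of preimages turns them back.
-/

/-- Correctness of the reduction from Grid Tiling with `≤` to Grid Tiling with `<`. -/
theorem gridTiling_le_to_lt
    (η κ : ℕ) (hη : 1 ≤ η) (hκ : 1 ≤ κ)
    (X : ℕ → ℕ → Finset (ℕ × ℕ))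
    (hX : ∀ i ∈ Finset.Icc 1 κ, ∀ j ∈ Finset.Icc 1 κ, ∀ p ∈ X i j,
      p.1 ∈ Finset.Icc 1 η ∧ p.2 ∈ Finset.Icc 1 η) :
    (∃ x : ℕ → ℕ → ℕ × ℕ,
      (∀ i ∈ Finset.Icc 1 κ, ∀ j ∈ Finset.Icc 1 κ, x i j ∈ X i j) ∧
      (∀ i, 1 ≤ i → i < κ → ∀ j ∈ Finset.Icc 1 κ, (x i j).1 ≤ (x (i + 1) j).1) ∧
      (∀ i ∈ Finset.Icc 1 κ, ∀ j, 1 ≤ j → j < κ → (x i j).2 ≤ (x i (j + 1)).2)) ↔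
    (∃ x : ℕ → ℕ → ℕ × ℕ,
      (∀ i ∈ Finset.Icc 1 κ, ∀ j ∈ Finset.Icc 1 κ,
        x i j ∈ (X i j).image (fun p => (p.1 * η ^ 2 + i, p.2 * η ^ 2 + j))) ∧
      (∀ i, 1 ≤ i → i < κ → ∀ j ∈ Finset.Icc 1 κ, (x i j).1 < (x (i + 1) j).1) ∧
      (∀ i ∈ Finset.Icc 1 κ, ∀ j, 1 ≤ j → j < κ → (x i j).2 < (x i (j + 1)).2)) := by
  have key : ∀ a b i : ℕ, a * η ^ 2 + i < b * η ^ 2 + (i + 1) ↔ a ≤ b := fun a b i => by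
    rw [← add_assoc, Nat.lt_succ_iff, Nat.add_le_add_iff_right]
    exact Nat.mul_le_mul_right_iff (pow_pos hη 2)
  constructor
  · rintro ⟨x, hmem, hfst, hsnd⟩
    refine ⟨fun i j => ((x i j).1 * η ^ 2 + i, (x i j).2 * η ^ 2 + j), ?_, ?_, ?_⟩
    · exact fun i hi j hj => Finset.mem_image_of_mem _ (hmem i hi j hj)
    · exact fun i h1 h2 j hj => (key _ _ _).2 (hfst i h1 h2 j hj)
    · exact fun i hi j h1 h2 => (key _ _ _).2 (hsnd i hi j h1 h2)
  · rintro ⟨x, hmem, hfst, hsnd⟩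
    -- The range conditions sit under the existential so that the chosen preimage is a total
    -- function of `i` and `j`.
    have hpre : ∀ i j, ∃ p : ℕ × ℕ, i ∈ Finset.Icc 1 κ → j ∈ Finset.Icc 1 κ →
        p ∈ X i j ∧ (p.1 * η ^ 2 + i, p.2 * η ^ 2 + j) = x i j := by
      intro i j
      by_cases h : i ∈ Finset.Icc 1 κ ∧ j ∈ Finset.Icc 1 κ
      · obtain ⟨p, hp⟩ := Finset.mem_image.1 (hmem i h.1 j h.2)
        exact ⟨p, fun _ _ => hp⟩
      · exact ⟨0, fun hi hj => (h ⟨hi, hj⟩).elim⟩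
    choose y hy using hpre
    refine ⟨y, fun i hi j hj => (hy i j hi hj).1, ?_, ?_⟩
    · intro i h1 h2 j hj
      have h := hfst i h1 h2 j hj
      rw [← (hy i j (Finset.mem_Icc.2 ⟨h1, h2.le⟩) hj).2,
        ← (hy (i + 1) j (Finset.mem_Icc.2 ⟨by omega, h2⟩) hj).2] at h
      exact (key _ _ _).1 h
    · intro i hi j h1 h2
      have h := hsnd i hi j h1 h2
      rw [← (hy i j hi (Finset.mem_Icc.2 ⟨h1, h2.le⟩)).2,
        ← (hy i (j + 1) hi (Finset.mem_Icc.2 ⟨by omega, h2⟩)).2] at h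
      exact (key _ _ _).1 h
end

section
/- Let S be a finite set of points in the Euclidean plane and let P be a finite collection of pairwise disjoint three-element subsets {u, v, w} of S such that dist(u, v) ≤ 2, dist(v, w) ≤ 2, and dist(u, w) > 2 (each triple induces a P3 in the unit disk graph G(S, 1)). If r : S → ℝ is a radius assignment such that the disk graph G(S, r) is P3-free, then the number of points p ∈ S with r(p) ≠ 1 is at least |P|. -/
/-!
Every triple of the packing contains a scaled point, since otherwise the disk graph of `r`
agrees with the unit disk graph on it and contains its P3. As the triples are pairwise disjoint,
choosing one scaled point per triple is an injection from the packing into the scaled points.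
-/

/-- The P3-packing lower bound of Phase 1 of the FPT algorithm for Scaling To
Cluster: any radius assignment whose disk graph is P3-free must scale at least one
disk per P3 of a vertex-disjoint P3 packing of the unit disk graph. -/
theorem p3_packing_lower_bound
    (S : Finset (EuclideanSpace ℝ (Fin 2)))
    (P : Finset (Finset (EuclideanSpace ℝ (Fin 2))))
    (hsub : ∀ t ∈ P, t ⊆ S)
    (hdisj : ∀ t ∈ P, ∀ t' ∈ P, t ≠ t' → Disjoint t t')
    (htriple : ∀ t ∈ P, ∃ u v w : EuclideanSpace ℝ (Fin 2),
      u ≠ v ∧ v ≠ w ∧ u ≠ w ∧ (t : Set (EuclideanSpace ℝ (Fin 2))) = {u, v, w} ∧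
      dist u v ≤ 2 ∧ dist v w ≤ 2 ∧ 2 < dist u w)
    (r : EuclideanSpace ℝ (Fin 2) → ℝ)
    (hP3free : ¬ ∃ u ∈ S, ∃ v ∈ S, ∃ w ∈ S, u ≠ v ∧ v ≠ w ∧ u ≠ w ∧
      dist u v ≤ r u + r v ∧ dist v w ≤ r v + r w ∧ ¬ dist u w ≤ r u + r w) :
    P.card ≤ {p | p ∈ S ∧ r p ≠ 1}.ncard := by
  -- A triple with all radii equal to 1 would still induce a P3 in the disk graph of `r`.
  have key : ∀ t ∈ P, ∃ p ∈ t, r p ≠ 1 := by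
    intro t ht
    by_contra! hall
    obtain ⟨u, v, w, huv, hvw, huw, hset, h1, h2, h3⟩ := htriple t ht
    have hu : u ∈ t := by rw [← Finset.mem_coe, hset]; simp
    have hv : v ∈ t := by rw [← Finset.mem_coe, hset]; simp
    have hw : w ∈ t := by rw [← Finset.mem_coe, hset]; simp
    refine hP3free ⟨u, hsub t ht hu, v, hsub t ht hv, w, hsub t ht hw, huv, hvw, huw, ?_⟩
    rw [hall u hu, hall v hv, hall w hw]
    exact ⟨by linarith, by linarith, by linarith⟩
  choose! f hf hr using key
  rw [← Set.ncard_coe_finset P]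
  -- Disjointness of the triples makes the choice of a scaled point in each injective.
  refine Set.ncard_le_ncard_of_injOn f (fun t ht => ⟨hsub t ht (hf t ht), hr t ht⟩) ?_
    (S.finite_toSet.subset fun p hp => hp.1)
  intro t ht t' ht' heq
  by_contra hne
  exact Finset.disjoint_left.mp (hdisj t ht t' ht' hne) (hf t ht) (heq ▸ hf t' ht')
end
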